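/- Let f₁ and f₂ be right-ideal morphisms of nA* that are normal with finite joinless domain codes (i.e. for j = 1, 2: domC(f_j) is a finite joinless code, imC(f_j) is a finite joinless code, and f_j(domC(f_j)) = imC(f_j)). Then maxlen(f₂ ∘ f₁) ≤ maxlen(f₂) + maxlen(f₁), provided f₂ ∘ f₁ is not the empty function. -/

import Mathlib

open Stream'

variable {A : Type*} {n : ℕ}

/-- The initial-factor order `u ≤_init v` on `n`-tuples of strings:
`u i` is a prefix of `v i` for every coordinate `i`. -/
def initLE (u v : Fin n → List A) : Prop := ∀ i, u i <+: v i

/-- `w` is the join (least upper bound w.r.t. `initLE`) of `u` and `v`. -/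
def IsJoin (u v w : Fin n → List A) : Prop :=
  initLE u w ∧ initLE v w ∧ ∀ z, initLE u z → initLE v z → initLE w z

/-- The join of `u` and `v` exists. -/
def JoinEx (u v : Fin n → List A) : Prop := ∃ w, IsJoin u v w

/-- The set join `X ∨ Y = {x ∨ y : x ∈ X, y ∈ Y, x ∨ y exists}`. -/
def setJoin (X Y : Set (Fin n → List A)) : Set (Fin n → List A) :=
  {w | ∃ x ∈ X, ∃ y ∈ Y, IsJoin x y w}

/-- A joinless code: no two distinct elements have a join. -/
def Joinless (S : Set (Fin n → List A)) : Prop :=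
  ∀ x ∈ S, ∀ y ∈ S, x ≠ y → ¬ JoinEx x y

/-- A maximal joinless code. -/
def MaxJoinless (S : Set (Fin n → List A)) : Prop :=
  Joinless S ∧ ∀ T : Set (Fin n → List A), Joinless T → S ⊆ T → S = T

/-- Coordinatewise concatenation in `nA*`. -/
def cat (x v : Fin n → List A) : Fin n → List A := fun i => x i ++ v i

/-- The right ideal `S·nA*` generated by `S`. -/
def rIdeal (S : Set (Fin n → List A)) : Set (Fin n → List A) :=
  {w | ∃ s ∈ S, ∃ v, w = cat s v}

/-- Coordinatewise concatenation of a tuple of finite strings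
with a tuple of right-infinite words. -/
def catOmega (x : Fin n → List A) (w : Fin n → Stream' A) : Fin n → Stream' A :=
  fun i => x i ++ₛ w i

/-- `S·nA^ω`. -/
def omegaIdeal (S : Set (Fin n → List A)) : Set (Fin n → Stream' A) :=
  {w | ∃ s ∈ S, ∃ u, w = catOmega s u}

/-- `P ≡_fin Q`: the symmetric difference of the generated right ideals is finite. -/
def equivFin (P Q : Set (Fin n → List A)) : Prop :=
  (symmDiff (rIdeal P) (rIdeal Q)).Finite

/-- `maxlen(S)`: the maximum coordinate length over a (finite nonempty) set. -/
noncomputable def maxlen (S : Set (Fin n → List A)) : ℕ :=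
  sSup {m | ∃ x ∈ S, ∃ i, (x i).length = m}

/-- A right-ideal morphism of `nA*`, as a partial function:
if `f x = y` then `f (xv) = yv` (in particular the domain is a right ideal). -/
def IsRIM (f : (Fin n → List A) →. (Fin n → List A)) : Prop :=
  ∀ x y, y ∈ f x → ∀ v, cat y v ∈ f (cat x v)

/-- The domain code `domC f`: the `initLE`-minimal elements of `Dom f`
(the unique initial-factor code generating the right ideal `Dom f`). -/
def domC (f : (Fin n → List A) →. (Fin n → List A)) : Set (Fin n → List A) :=
  {x ∈ f.Dom | ∀ y ∈ f.Dom, initLE y x → y = x}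

/-- The image code `imC f`: the `initLE`-minimal elements of `Im f`
(the unique initial-factor code generating the right ideal `Im f`). -/
def imC (f : (Fin n → List A) →. (Fin n → List A)) : Set (Fin n → List A) :=
  {y ∈ f.ran | ∀ z ∈ f.ran, initLE z y → z = y}

/-- An initial-factor code: an antichain for the strict initial-factor order. -/
def InitCode (S : Set (Fin n → List A)) : Prop :=
  ∀ x ∈ S, ∀ y ∈ S, initLE x y → x = y

/-- `maxlen` of a right-ideal morphism: `maxlen(domC(f) ∪ f(domC(f)))`. -/
noncomputable def maxlenM (f : (Fin n → List A) →. (Fin n → List A)) : ℕ :=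
  maxlen (domC f ∪ f.image (domC f))

/-! Let `x` be in the domain code of `f₂ ∘ f₁`. Choose `p ∈ domC f₁` below `x`, put `q = f₁ p`, and
choose `d ∈ domC f₂` below `f₁ x`. Since `q` and `d` are both initial factors of `f₁ x`, they have a
join `q ∨ d = q s = d t`, and `f₂ ∘ f₁` is already defined at `p s`, which is an initial factor of
`x`. By minimality `x = p s`, so `f₂ (f₁ x) = f₂ (d t) = (f₂ d) t`. In every coordinate `s` is no
longer than `d` and `t` is no longer than `q`, whence the bound. -/

section InitialFactors

variable {u v w z : Fin n → List A}

theorem initLE.trans (huv : initLE u v) (hvw : initLE v w) : initLE u w :=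
  fun i => (huv i).trans (hvw i)

theorem initLE.antisymm (huv : initLE u v) (hvu : initLE v u) : u = v :=
  funext fun i => (huv i).eq_of_length_le (hvu i).length_le

theorem initLE.exists_eq_cat (huw : initLE u w) : ∃ v, w = cat u v := by
  choose v hv using huw
  exact ⟨v, funext fun i => (hv i).symm⟩

theorem initLE_cat (u v : Fin n → List A) : initLE u (cat u v) :=
  fun i => List.prefix_append (u i) (v i)

theorem initLE_cat_cat_iff : initLE (cat u v) (cat u w) ↔ initLE v w :=
  forall_congr' fun i => List.prefix_append_right_inj (u i)

theorem initLE.eq_of_sum_length_le (huv : initLE u v)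
    (h : ∑ i, (v i).length ≤ ∑ i, (u i).length) : u = v := by
  have hle : ∀ i ∈ Finset.univ, (u i).length ≤ (v i).length := fun i _ => (huv i).length_le
  have heq := (Finset.sum_eq_sum_iff_of_le hle).1 ((Finset.sum_le_sum hle).antisymm h)
  exact funext fun i => (huv i).eq_of_length (heq i (Finset.mem_univ i))

theorem IsJoin.symm (h : IsJoin u v w) : IsJoin v u w :=
  ⟨h.2.1, h.1, fun z hv hu => h.2.2 z hu hv⟩

theorem IsJoin.unique (hw : IsJoin u v w) (hz : IsJoin u v z) : w = z :=
  initLE.antisymm (hw.2.2 z hz.1 hz.2.1) (hz.2.2 w hw.1 hw.2.1)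

end InitialFactors

section Joins

variable {u v w : Fin n → List A}

/-- The tuple `s` for which `u s = u ∨ v` when `u` and `v` have a join: in each coordinate, the part
of `v` lying beyond the length of `u`. -/
def joinComplement (u v : Fin n → List A) : Fin n → List A :=
  fun i => (v i).drop (u i).length

theorem length_cat_joinComplement_le (x u v : Fin n → List A) (i : Fin n) :
    (cat x (joinComplement u v) i).length ≤ (x i).length + (v i).length := by
  simp only [cat, joinComplement, List.length_append, List.length_drop]
  omega

theorem append_drop_length_eq_or_eq_of_prefix {a b c : List A} (ha : a <+: c) (hb : b <+: c) :
    (a <+: b ∧ a ++ b.drop a.length = b) ∨ (b <+: a ∧ a ++ b.drop a.length = a) := by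
  rcases List.prefix_or_prefix_of_prefix ha hb with hab | hba
  · exact .inl ⟨hab, List.prefix_iff_eq_append.1 hab⟩
  · exact .inr ⟨hba, by rw [List.drop_eq_nil_of_le hba.length_le, List.append_nil]⟩

theorem isJoin_cat_joinComplement (hu : initLE u w) (hv : initLE v w) :
    IsJoin u v (cat u (joinComplement u v)) := by
  refine ⟨initLE_cat u _, fun i => ?_, fun z hzu hzv i => ?_⟩ <;>
    simp only [cat, joinComplement]
  · rcases append_drop_length_eq_or_eq_of_prefix (hu i) (hv i) with ⟨-, h⟩ | ⟨hvu, h⟩ <;> rw [h]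
    exact hvu
  · rcases append_drop_length_eq_or_eq_of_prefix (hu i) (hv i) with ⟨-, h⟩ | ⟨-, h⟩ <;> rw [h]
    exacts [hzv i, hzu i]

theorem cat_joinComplement_comm (hu : initLE u w) (hv : initLE v w) :
    cat u (joinComplement u v) = cat v (joinComplement v u) :=
  (isJoin_cat_joinComplement hu hv).unique (isJoin_cat_joinComplement hv hu).symm

end Joins

section Maxlen

variable {S : Set (Fin n → List A)}

theorem bddAbove_lengths (hS : S.Finite) : BddAbove {m | ∃ x ∈ S, ∃ i, (x i).length = m} := by
  have hlengths : {m | ∃ x ∈ S, ∃ i, (x i).length = m} =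
      ⋃ x ∈ S, Set.range fun i => (x i).length := by
    ext m
    simp only [Set.mem_ofPred_eq, Set.mem_iUnion, Set.mem_range, exists_prop]
  rw [hlengths]
  exact (hS.biUnion fun x _ => Set.finite_range _).bddAbove

theorem length_le_maxlen (hS : S.Finite) {x : Fin n → List A} (hx : x ∈ S) (i : Fin n) :
    (x i).length ≤ maxlen S :=
  le_csSup (bddAbove_lengths hS) ⟨x, hx, i, rfl⟩

theorem exists_length_eq_maxlen (hn : 1 ≤ n) (hS : S.Finite) (hne : S.Nonempty) :
    ∃ x ∈ S, ∃ i, (x i).length = maxlen S := by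
  obtain ⟨x, hx⟩ := hne
  exact Nat.sSup_mem (s := {m | ∃ x ∈ S, ∃ i, (x i).length = m})
    ⟨_, x, hx, ⟨0, hn⟩, rfl⟩ (bddAbove_lengths hS)

end Maxlen

section Codes

variable {f f₁ f₂ : (Fin n → List A) →. (Fin n → List A)} {p q d e x z : Fin n → List A}

theorem exists_mem_domC_initLE (hx : x ∈ f.Dom) : ∃ p ∈ domC f, initLE p x := by
  obtain ⟨p, ⟨hp, hpx⟩, hmin⟩ :=
    (measure fun y : Fin n → List A => ∑ i, (y i).length).wf.has_min
      {y | y ∈ f.Dom ∧ initLE y x} ⟨x, hx, fun i => List.prefix_refl (x i)⟩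
  refine ⟨p, ⟨hp, fun y hy hyp => ?_⟩, hpx⟩
  exact hyp.eq_of_sum_length_le (not_lt.1 (hmin y ⟨hy, hyp.trans hpx⟩))

theorem finite_pfun_image {α β : Type*} (g : α →. β) {s : Set α} (hs : s.Finite) :
    (g.image s).Finite := by
  classical
  lift s to Finset α using hs
  rw [← Finset.coe_pimage]
  exact Finset.finite_toSet _

theorem finite_domC_union_image (hf : (domC f).Finite) : (domC f ∪ f.image (domC f)).Finite :=
  hf.union (finite_pfun_image f hf)

theorem length_le_maxlenM_of_mem_domC (hf : (domC f).Finite) (hp : p ∈ domC f) (i : Fin n) :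
    (p i).length ≤ maxlenM f :=
  length_le_maxlen (finite_domC_union_image hf) (.inl hp) i

theorem length_le_maxlenM_of_mem_apply (hf : (domC f).Finite) (hp : p ∈ domC f) (hq : q ∈ f p)
    (i : Fin n) : (q i).length ≤ maxlenM f :=
  length_le_maxlen (finite_domC_union_image hf) (.inr ⟨p, hp, hq⟩) i

theorem cat_joinComplement_mem_comp (hf₁ : IsRIM f₁) (hf₂ : IsRIM f₂) (hq : q ∈ f₁ p)
    (he : e ∈ f₂ d) (hqz : initLE q z) (hdz : initLE d z) :
    cat e (joinComplement d q) ∈ f₂.comp f₁ (cat p (joinComplement q d)) := by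
  refine Part.mem_bind_iff.2 ⟨cat q (joinComplement q d), hf₁ p q hq _, ?_⟩
  rw [cat_joinComplement_comm hqz hdz]
  exact hf₂ d e he _

theorem exists_eq_cat_joinComplement_of_mem_domC_comp (hf₁ : IsRIM f₁) (hf₂ : IsRIM f₂)
    (hx : x ∈ domC (f₂.comp f₁)) (hz : z ∈ f₂.comp f₁ x) :
    ∃ p ∈ domC f₁, ∃ q ∈ f₁ p, ∃ d ∈ domC f₂, ∃ e ∈ f₂ d,
      x = cat p (joinComplement q d) ∧ z = cat e (joinComplement d q) := by
  obtain ⟨y, hy, hzy⟩ := Part.mem_bind_iff.1 hz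
  obtain ⟨p, hp, hpx⟩ := exists_mem_domC_initLE (Part.dom_iff_mem.2 ⟨y, hy⟩)
  obtain ⟨d, hd, hdy⟩ := exists_mem_domC_initLE (Part.dom_iff_mem.2 ⟨z, hzy⟩)
  obtain ⟨q, hq⟩ := Part.dom_iff_mem.1 hp.1
  obtain ⟨e, he⟩ := Part.dom_iff_mem.1 hd.1
  obtain ⟨v, rfl⟩ := hpx.exists_eq_cat
  obtain rfl : y = cat q v := Part.mem_unique hy (hf₁ p q hq v)
  have hmem := cat_joinComplement_mem_comp hf₁ hf₂ hq he (initLE_cat q v) hdy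
  have hjoin : initLE (cat q (joinComplement q d)) (cat q v) :=
    (isJoin_cat_joinComplement (initLE_cat q v) hdy).2.2 _ (initLE_cat q v) hdy
  have hxeq : cat p (joinComplement q d) = cat p v :=
    hx.2 _ (Part.dom_iff_mem.2 ⟨_, hmem⟩) (initLE_cat_cat_iff.2 (initLE_cat_cat_iff.1 hjoin))
  exact ⟨p, hp, q, hq, d, hd, e, he, hxeq.symm, Part.mem_unique hz (hxeq ▸ hmem)⟩

theorem finite_domC_comp (hf₁ : IsRIM f₁) (hf₂ : IsRIM f₂) (hd₁ : (domC f₁).Finite)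
    (hd₂ : (domC f₂).Finite) : (domC (f₂.comp f₁)).Finite := by
  have hpairs := hd₁.prod (finite_pfun_image f₁ hd₁)
  refine (hpairs.image2 (fun a d => cat a.1 (joinComplement a.2 d)) hd₂).subset fun x hx => ?_
  obtain ⟨z, hz⟩ := Part.dom_iff_mem.1 hx.1
  obtain ⟨p, hp, q, hq, d, hd, -, -, hxeq, -⟩ :=
    exists_eq_cat_joinComplement_of_mem_domC_comp hf₁ hf₂ hx hz
  exact ⟨(p, q), ⟨hp, p, hp, hq⟩, d, hd, hxeq.symm⟩

theorem length_le_of_mem_domC_comp (hf₁ : IsRIM f₁) (hf₂ : IsRIM f₂) (hd₁ : (domC f₁).Finite)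
    (hd₂ : (domC f₂).Finite) (hx : x ∈ domC (f₂.comp f₁)) (hz : z ∈ f₂.comp f₁ x) (i : Fin n) :
    (x i).length ≤ maxlenM f₂ + maxlenM f₁ ∧ (z i).length ≤ maxlenM f₂ + maxlenM f₁ := by
  obtain ⟨p, hp, q, hq, d, hd, e, he, rfl, rfl⟩ :=
    exists_eq_cat_joinComplement_of_mem_domC_comp hf₁ hf₂ hx hz
  constructor
  · calc (cat p (joinComplement q d) i).length
        ≤ (p i).length + (d i).length := length_cat_joinComplement_le p q d i
      _ ≤ maxlenM f₁ + maxlenM f₂ := add_le_add (length_le_maxlenM_of_mem_domC hd₁ hp i)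
          (length_le_maxlenM_of_mem_domC hd₂ hd i)
      _ = maxlenM f₂ + maxlenM f₁ := add_comm _ _
  · calc (cat e (joinComplement d q) i).length
        ≤ (e i).length + (q i).length := length_cat_joinComplement_le e d q i
      _ ≤ maxlenM f₂ + maxlenM f₁ := add_le_add (length_le_maxlenM_of_mem_apply hd₂ hd he i)
          (length_le_maxlenM_of_mem_apply hd₁ hp hq i)

end Codes

theorem stmt_17_general (hn : 1 ≤ n) (f₁ f₂ : (Fin n → List A) →. (Fin n → List A))
    (hf₁ : IsRIM f₁) (hf₂ : IsRIM f₂) (hd₁ : (domC f₁).Finite) (hd₂ : (domC f₂).Finite)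
    (hne : (f₂.comp f₁).Dom.Nonempty) :
    maxlenM (f₂.comp f₁) ≤ maxlenM f₂ + maxlenM f₁ := by
  obtain ⟨x₀, hx₀⟩ := hne
  obtain ⟨p, hp, -⟩ := exists_mem_domC_initLE hx₀
  obtain ⟨w, hw, i, hmax⟩ := exists_length_eq_maxlen hn
    (finite_domC_union_image (finite_domC_comp hf₁ hf₂ hd₁ hd₂)) ⟨p, .inl hp⟩
  rw [maxlenM, ← hmax]
  rcases hw with hw | ⟨x, hx, hwx⟩
  · obtain ⟨z, hz⟩ := Part.dom_iff_mem.1 hw.1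
    exact (length_le_of_mem_domC_comp hf₁ hf₂ hd₁ hd₂ hw hz i).1
  · exact (length_le_of_mem_domC_comp hf₁ hf₂ hd₁ hd₂ hx hwx i).2

/-- Length formula: for normal right-ideal morphisms with finite joinless domain
and image codes, `maxlen(f₂ ∘ f₁) ≤ maxlen(f₂) + maxlen(f₁)`. -/
theorem stmt_17 [Fintype A] [Nonempty A] (hn : 1 ≤ n)
    (f₁ f₂ : (Fin n → List A) →. (Fin n → List A))
    (hf₁ : IsRIM f₁) (hf₂ : IsRIM f₂)
    (hd₁ : (domC f₁).Finite) (hdj₁ : Joinless (domC f₁))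
    (hi₁ : (imC f₁).Finite) (hij₁ : Joinless (imC f₁))
    (hnorm₁ : f₁.image (domC f₁) = imC f₁)
    (hd₂ : (domC f₂).Finite) (hdj₂ : Joinless (domC f₂))
    (hi₂ : (imC f₂).Finite) (hij₂ : Joinless (imC f₂))
    (hnorm₂ : f₂.image (domC f₂) = imC f₂)
    (hne : (f₂.comp f₁).Dom.Nonempty) :
    maxlenM (f₂.comp f₁) ≤ maxlenM f₂ + maxlenM f₁ :=
  stmt_17_general hn f₁ f₂ hf₁ hf₂ hd₁ hd₂ hne
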